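/- arXiv:2010.06236 — 2 statements merged into one kernel-verified Lean document; each statement's English description precedes it below -/
import Mathlib

section
/- Let L^(0) ∈ ℝ^{m×n} be an admissible gain and define recursively: P^(τ) is the solution of the stochastic Lyapunov equation for L^(τ), and L^(τ+1) = −(R + Bᵀ P^(τ) B + Σ_{j=1}^q β̄_j B_jᵀ P^(τ) B_j)^{-1} Bᵀ P^(τ) A. Then every L^(τ) is admissible, the sequence (P^(τ)) is nonincreasing in the Loewner order and bounded below by 0, P^(τ) converges as τ → ∞ to a symmetric positive semidefinite matrix P* that solves the stochastic algebraic Riccati equation, and L^(τ) converges to L* = −(R + Bᵀ P* B + Σ_{j=1}^q β̄_j B_jᵀ P* B_j)^{-1} Bᵀ P* A. -/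
open Matrix Filter Topology

/-- The sandwich map `X ↦ M * X * Mᵀ` as a linear endomorphism of `n × n` real matrices. -/
noncomputable def sandwich {n : ℕ} (M : Matrix (Fin n) (Fin n) ℝ) :
    Module.End ℝ (Matrix (Fin n) (Fin n) ℝ) :=
  (LinearMap.mulLeft ℝ M).comp (LinearMap.mulRight ℝ Mᵀ)

/-- The closed-loop covariance operator
`𝒯_L(X) = (A+BL) X (A+BL)ᵀ + Σᵢ ᾱᵢ Aᵢ X Aᵢᵀ + Σⱼ β̄ⱼ (BⱼL) X (BⱼL)ᵀ`. -/
noncomputable def calT {n m p q : ℕ}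
    (A : Matrix (Fin n) (Fin n) ℝ) (A' : Fin p → Matrix (Fin n) (Fin n) ℝ)
    (B : Matrix (Fin n) (Fin m) ℝ) (B' : Fin q → Matrix (Fin n) (Fin m) ℝ)
    (al : Fin p → ℝ) (be : Fin q → ℝ) (L : Matrix (Fin m) (Fin n) ℝ) :
    Module.End ℝ (Matrix (Fin n) (Fin n) ℝ) :=
  sandwich (A + B * L) + ∑ i, al i • sandwich (A' i) + ∑ j, be j • sandwich (B' j * L)

/-- The (trace-)adjoint operator
`𝒯_L^*(P) = (A+BL)ᵀ P (A+BL) + Σᵢ ᾱᵢ Aᵢᵀ P Aᵢ + Σⱼ β̄ⱼ Lᵀ Bⱼᵀ P Bⱼ L`. -/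
noncomputable def calTstar {n m p q : ℕ}
    (A : Matrix (Fin n) (Fin n) ℝ) (A' : Fin p → Matrix (Fin n) (Fin n) ℝ)
    (B : Matrix (Fin n) (Fin m) ℝ) (B' : Fin q → Matrix (Fin n) (Fin m) ℝ)
    (al : Fin p → ℝ) (be : Fin q → ℝ) (L : Matrix (Fin m) (Fin n) ℝ) :
    Module.End ℝ (Matrix (Fin n) (Fin n) ℝ) :=
  sandwich (A + B * L)ᵀ + ∑ i, al i • sandwich (A' i)ᵀ + ∑ j, be j • sandwich (B' j * L)ᵀ

/-- A gain `L` is admissible if the spectral radius of `𝒯_L`, as a linear endomorphism of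
the space of `n × n` real matrices, is strictly less than `1`. -/
noncomputable def Admissible {n m p q : ℕ}
    (A : Matrix (Fin n) (Fin n) ℝ) (A' : Fin p → Matrix (Fin n) (Fin n) ℝ)
    (B : Matrix (Fin n) (Fin m) ℝ) (B' : Fin q → Matrix (Fin n) (Fin m) ℝ)
    (al : Fin p → ℝ) (be : Fin q → ℝ) (L : Matrix (Fin m) (Fin n) ℝ) : Prop :=
  spectralRadius ℝ (calT A A' B B' al be L) < 1

/-! Write `F X = ∑ i, M i * X * (M i)ᵀ` for the second-moment operator of a closed loop. It
preserves the cone of matrices with nonnegative quadratic form, which is closed with nonempty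
interior. If the spectral radius of `F` is less than one, then `1 - F` is inverse positive on this
cone: for `w` in the interior the path `(1 - s • F)⁻¹ w`, `0 ≤ s ≤ 1`, starts in the interior and
cannot cross the boundary. Conversely, by separation of convex sets, either some `Z` in the cone
strictly decreases under the trace adjoint of `F`, which bounds all eigenvalues of the adjoint, or
some nonzero positive semidefinite `X` satisfies `F X ≥ X`. Hence the loop is stable if and only if
no such `X` exists.

Completing the square in the gain, the cost `P` of a gain `L` satisfies the Lyapunov equation of the
improved gain `K` up to the surplus `(L - K)ᵀ * H * (L - K)`, where `H` is positive definite. Paired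
with an `X` as above the surplus has to vanish, so `L * X = K * X` and `X` is an obstruction for `L`
as well; thus improvement preserves stability. Inverse positivity then gives that the cost of `K` is
at most `P`. The costs decrease and are nonnegative, so they converge, and the limit of the Lyapunov
equations is the Riccati equation. -/

section SpectralRadius

variable {V : Type*} [AddCommGroup V] [Module ℝ V] {G : Module.End ℝ V}

lemma isUnit_one_sub_smul_of_spectralRadius_lt_one (hG : spectralRadius ℝ G < 1) {s : ℝ}
    (hs : s ∈ Set.Icc (0 : ℝ) 1) : IsUnit (1 - s • G) := by
  rcases hs.1.eq_or_lt with rfl | hpos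
  · simp
  have hnorm : 1 ≤ ‖s⁻¹‖₊ := by
    rw [← NNReal.coe_le_coe, coe_nnnorm, Real.norm_of_nonneg (inv_nonneg.2 hs.1)]
    exact (one_le_inv₀ hpos).2 hs.2
  have hmem : s⁻¹ ∉ spectrum ℝ G := fun hmem =>
    ((ENNReal.one_le_coe_iff.2 hnorm).trans
      (le_iSup₂ (f := fun k (_ : k ∈ spectrum ℝ G) => (‖k‖₊ : ENNReal)) s⁻¹ hmem)).not_gt hG
  have hunit := (spectrum.notMem_iff.1 hmem).smul (Units.mk0 s hpos.ne')
  rwa [Units.smul_mk0, smul_sub, Algebra.algebraMap_eq_smul_one, smul_inv_smul₀ hpos.ne'] at hunit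

lemma injective_one_sub_of_spectralRadius_lt_one (hG : spectralRadius ℝ G < 1) :
    Function.Injective ⇑(1 - G) := by
  have hunit := isUnit_one_sub_smul_of_spectralRadius_lt_one hG (Set.right_mem_Icc.2 zero_le_one)
  rw [one_smul] at hunit
  exact ((Module.End.isUnit_iff _).1 hunit).injective

lemma spectralRadius_lt_one_of_hasEigenvalue [FiniteDimensional ℝ V]
    (hG : ∀ μ, G.HasEigenvalue μ → |μ| < 1) : spectralRadius ℝ G < 1 := by
  have hfin : (spectrum ℝ G).Finite := Module.End.finite_spectrum G
  have hsup : spectralRadius ℝ G = hfin.toFinset.sup fun μ => (‖μ‖₊ : ENNReal) := by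
    simp only [spectralRadius, Finset.sup_eq_iSup, Set.Finite.mem_toFinset]
  rw [hsup, Finset.sup_lt_iff (by simp)]
  intro μ hμ
  have hlt := hG μ (Module.End.hasEigenvalue_iff_mem_spectrum.2 (hfin.mem_toFinset.1 hμ))
  rw [ENNReal.coe_lt_one_iff, ← NNReal.coe_lt_coe]
  exact hlt

end SpectralRadius

section ConvexCone

variable {V : Type*} [NormedAddCommGroup V] [NormedSpace ℝ V] {K : ConvexCone ℝ V}

lemma add_mem_interior_convexCone {x y : V} (hx : x ∈ K) (hy : y ∈ interior (K : Set V)) :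
    x + y ∈ interior (K : Set V) := by
  refine interior_maximal ?_ (isOpenMap_add_left x _ isOpen_interior) (Set.mem_image_of_mem _ hy)
  rintro _ ⟨z, hz, rfl⟩
  exact K.add_mem hx (interior_subset hz)

lemma smul_mem_interior_convexCone {c : ℝ} (hc : 0 < c) {x : V}
    (hx : x ∈ interior (K : Set V)) : c • x ∈ interior (K : Set V) := by
  refine interior_maximal ?_ (isOpenMap_smul₀ hc.ne' _ isOpen_interior) (Set.mem_image_of_mem _ hx)
  rintro _ ⟨z, hz, rfl⟩
  exact K.smul_mem hc (interior_subset hz)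

lemma mem_of_forall_pos_add_smul_mem (hK : IsClosed (K : Set V)) {x y : V}
    (h : ∀ ε : ℝ, 0 < ε → x + ε • y ∈ K) : x ∈ K := by
  have hlim : Tendsto (fun ε : ℝ => x + ε • y) (𝓝[>] 0) (𝓝 x) := by
    have hcont : Continuous fun ε : ℝ => x + ε • y := by fun_prop
    simpa using (hcont.tendsto 0).mono_left nhdsWithin_le_nhds
  refine hK.mem_of_tendsto hlim ?_
  filter_upwards [self_mem_nhdsWithin] with ε hε using h ε hε

theorem exists_mem_interior_or_exists_nonneg_functional (hK : (interior (K : Set V)).Nonempty)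
    (T : V →ₗ[ℝ] V) :
    (∃ x ∈ K, T x ∈ interior (K : Set V)) ∨
      ∃ φ : V →ₗ[ℝ] ℝ, φ ≠ 0 ∧ (∀ x ∈ K, 0 ≤ φ x) ∧ ∀ x ∈ K, φ (T x) ≤ 0 := by
  refine or_iff_not_imp_left.2 fun hdisj => ?_
  push Not at hdisj
  obtain ⟨f, u, hfu, huf⟩ := geometric_hahn_banach_open (s := interior (K : Set V))
    (t := T '' K) K.convex.interior isOpen_interior (K.convex.linear_image T)
    (Set.disjoint_right.2 (by rintro _ ⟨x, hx, rfl⟩; exact hdisj x hx))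
  obtain ⟨e, he⟩ := hK
  -- A linear functional that is bounded on one side along a ray has a sign on that ray.
  have hfK : ∀ x ∈ K, f x ≤ 0 := by
    intro x hx
    by_contra! hpos
    obtain ⟨c, hc⟩ := exists_gt (max 0 ((u - f e) / f x))
    have hlt := hfu _ <|
      add_mem_interior_convexCone (K.smul_mem ((le_max_left _ _).trans_lt hc) hx) he
    have hgt := (div_lt_iff₀ hpos).1 ((le_max_right _ _).trans_lt hc)
    rw [map_add, map_smul, smul_eq_mul] at hlt
    linarith
  have hfT : ∀ x ∈ K, 0 ≤ f (T x) := by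
    intro x hx
    by_contra! hneg
    obtain ⟨c, hc⟩ := exists_gt (max 0 (u / f (T x)))
    have hge := huf _ ⟨_, K.smul_mem ((le_max_left _ _).trans_lt hc) hx, rfl⟩
    have hlt := (div_lt_iff_of_neg hneg).1 ((le_max_right _ _).trans_lt hc)
    rw [map_smul, map_smul, smul_eq_mul] at hge
    linarith
  refine ⟨-(f : V →ₗ[ℝ] ℝ), fun hf => ?_, fun x hx => ?_, fun x hx => ?_⟩
  · have hf0 : ∀ x, f x = 0 := fun x => by simpa using LinearMap.congr_fun hf x
    have hlt := hfu e he
    have hge := huf _ ⟨e, interior_subset he, rfl⟩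
    rw [hf0] at hlt hge
    linarith
  · simpa using hfK x hx
  · simpa using hfT x hx

variable [FiniteDimensional ℝ V] {G : Module.End ℝ V}

lemma exists_continuous_sub_smul_map_eq (hG : spectralRadius ℝ G < 1) (w : V) :
    ∃ p : unitInterval → V, Continuous p ∧ ∀ s, p s - (s : ℝ) • G (p s) = w := by
  have : CompleteSpace V := FiniteDimensional.complete ℝ V
  let Gc : V →L[ℝ] V := Module.End.toContinuousLinearMap V G
  have hunit (s : unitInterval) : IsUnit (1 - (s : ℝ) • Gc) := by
    simpa using (isUnit_one_sub_smul_of_spectralRadius_lt_one hG s.2).map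
      (Module.End.toContinuousLinearMap (𝕜 := ℝ) V)
  refine ⟨fun s => Ring.inverse (1 - (s : ℝ) • Gc) w, ?_, fun s => ?_⟩
  · refine continuous_iff_continuousAt.2 fun s => ?_
    obtain ⟨u, hu⟩ := hunit s
    have hinv := NormedRing.inverse_continuousAt u
    rw [hu] at hinv
    have hcomp : ContinuousAt (fun r : unitInterval => Ring.inverse (1 - (r : ℝ) • Gc)) s :=
      ContinuousAt.comp (f := fun r : unitInterval => 1 - (r : ℝ) • Gc) hinv (by fun_prop)
    exact hcomp.clm_apply continuousAt_const
  · exact congrArg (fun f : V →L[ℝ] V => f w) (Ring.mul_inverse_cancel _ (hunit s))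

-- Along the path `(1 - s • G)⁻¹ w` membership in the closed cone improves to membership in its
-- interior, so the path can never leave the cone.
lemma exists_mem_sub_map_eq_of_mem_interior (hK : IsClosed (K : Set V)) (hGK : ∀ x ∈ K, G x ∈ K)
    (hG : spectralRadius ℝ G < 1) {w : V} (hw : w ∈ interior (K : Set V)) :
    ∃ y ∈ K, y - G y = w := by
  obtain ⟨p, hp, hpeq⟩ := exists_continuous_sub_smul_map_eq hG w
  have hint (s : unitInterval) (hs : p s ∈ K) : p s ∈ interior (K : Set V) := by
    rcases s.2.1.eq_or_lt with h0 | hpos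
    · simpa [← hpeq s, ← h0] using hw
    · rw [sub_eq_iff_eq_add'.1 (hpeq s)]
      exact add_mem_interior_convexCone (K.smul_mem hpos (hGK _ hs)) hw
  have hpre : p ⁻¹' (K : Set V) = p ⁻¹' interior (K : Set V) :=
    Set.Subset.antisymm hint (Set.preimage_mono interior_subset)
  have hclopen : IsClopen (p ⁻¹' (K : Set V)) :=
    ⟨hK.preimage hp, hpre ▸ isOpen_interior.preimage hp⟩
  have hzero : (0 : unitInterval) ∈ p ⁻¹' (K : Set V) := by
    have hp0 : p 0 = w := by simpa using hpeq 0
    exact Set.mem_preimage.2 (hp0 ▸ interior_subset hw)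
  have hone : p 1 ∈ K := (hclopen.eq_univ ⟨0, hzero⟩).ge (Set.mem_univ 1)
  exact ⟨p 1, hone, by simpa using hpeq 1⟩

theorem mem_of_sub_map_mem (hK : IsClosed (K : Set V)) (hKint : (interior (K : Set V)).Nonempty)
    (hGK : ∀ x ∈ K, G x ∈ K) (hG : spectralRadius ℝ G < 1) {x : V} (hx : x - G x ∈ K) : x ∈ K := by
  obtain ⟨e, he⟩ := hKint
  obtain ⟨y, -, hy⟩ := exists_mem_sub_map_eq_of_mem_interior hK hGK hG he
  refine mem_of_forall_pos_add_smul_mem hK (y := y) fun ε hε => ?_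
  obtain ⟨z, hzK, hz⟩ := exists_mem_sub_map_eq_of_mem_interior hK hGK hG
    (add_mem_interior_convexCone hx (smul_mem_interior_convexCone hε he))
  have hzxy : z = x + ε • y := injective_one_sub_of_spectralRadius_lt_one hG <| by
    simp only [LinearMap.sub_apply, Module.End.one_apply, hz, ← hy, map_add, map_smul]
  exact hzxy ▸ hzK

end ConvexCone

lemma exists_forall_mul_le_mul_of_homogeneous {E : Type*} [NormedAddCommGroup E] [NormedSpace ℝ E]
    [FiniteDimensional ℝ E] [Nontrivial E] {f g : E → ℝ} (hf : Continuous f) (hg : Continuous g)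
    (hf_smul : ∀ (c : ℝ) x, f (c • x) = c ^ 2 * f x)
    (hg_smul : ∀ (c : ℝ) x, g (c • x) = c ^ 2 * g x) (hg_pos : ∀ x, x ≠ 0 → 0 < g x) :
    ∃ x, x ≠ 0 ∧ ∀ y, f y * g x ≤ f x * g y := by
  have hsphere : ∀ x ∈ Metric.sphere (0 : E) 1, x ≠ 0 := by
    rintro _ hx rfl
    simp at hx
  obtain ⟨x, hx, hmax⟩ := (isCompact_sphere (0 : E) 1).exists_isMaxOn
    (NormedSpace.sphere_nonempty.2 zero_le_one)
    (hf.continuousOn.div hg.continuousOn fun y hy => (hg_pos y (hsphere y hy)).ne')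
  refine ⟨x, hsphere x hx, fun y => ?_⟩
  rcases eq_or_ne y 0 with rfl | hy
  · have hf0 : f 0 = 0 := by simpa using hf_smul 0 0
    have hg0 : g 0 = 0 := by simpa using hg_smul 0 0
    simp [hf0, hg0]
  · have hle : f (‖y‖⁻¹ • y) / g (‖y‖⁻¹ • y) ≤ f x / g x :=
      hmax (by simp [norm_smul, hy])
    have hc : (‖y‖⁻¹) ^ 2 ≠ 0 := by simpa using hy
    rw [hf_smul, hg_smul, mul_div_mul_left _ _ hc,
      div_le_div_iff₀ (hg_pos y hy) (hg_pos x (hsphere x hx))] at hle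
    exact hle

section AccretiveCone

variable {n : Type*} [Fintype n]

/-- The cone of real square matrices with nonnegative quadratic form. Unlike the cone of positive
semidefinite matrices it does not require symmetry, and therefore has nonempty interior. -/
def accretiveCone (n : Type*) [Fintype n] : ConvexCone ℝ (Matrix n n ℝ) where
  carrier := {X | ∀ v, 0 ≤ v ⬝ᵥ X *ᵥ v}
  smul_mem' c hc X hX v := by
    rw [smul_mulVec, dotProduct_smul]
    exact mul_nonneg hc.le (hX v)
  add_mem' X hX Y hY v := by
    rw [add_mulVec, dotProduct_add]
    exact add_nonneg (hX v) (hY v)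

lemma mem_accretiveCone {X : Matrix n n ℝ} : X ∈ accretiveCone n ↔ ∀ v, 0 ≤ v ⬝ᵥ X *ᵥ v :=
  Iff.rfl

lemma posSemidef_iff_mem_accretiveCone {X : Matrix n n ℝ} :
    X.PosSemidef ↔ Xᵀ = X ∧ X ∈ accretiveCone n := by
  simp [posSemidef_iff_dotProduct_mulVec, IsHermitian, mem_accretiveCone]

lemma isClosed_accretiveCone : IsClosed (accretiveCone n : Set (Matrix n n ℝ)) := by
  have hset : (accretiveCone n : Set (Matrix n n ℝ)) = ⋂ v, {X | 0 ≤ v ⬝ᵥ X *ᵥ v} := by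
    ext X
    simp [mem_accretiveCone]
  rw [hset]
  exact isClosed_iInter fun v => isClosed_le (by fun_prop) (by fun_prop)

lemma isClosed_setOf_posSemidef {n : Type*} [Finite n] :
    IsClosed {X : Matrix n n ℝ | X.PosSemidef} := by
  have := Fintype.ofFinite n
  simp only [posSemidef_iff_mem_accretiveCone, Set.ofPred_and]
  exact (isClosed_eq (by fun_prop) continuous_id).inter isClosed_accretiveCone

lemma mem_interior_accretiveCone_iff {X : Matrix n n ℝ} :
    X ∈ interior (accretiveCone n : Set (Matrix n n ℝ)) ↔ ∀ v, v ≠ 0 → 0 < v ⬝ᵥ X *ᵥ v := by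
  classical
  constructor
  · intro hX v hv
    have hlim : Tendsto (fun ε : ℝ => X - ε • (1 : Matrix n n ℝ)) (𝓝[>] 0) (𝓝 X) := by
      have hcont : Continuous fun ε : ℝ => X - ε • (1 : Matrix n n ℝ) := by fun_prop
      simpa using (hcont.tendsto 0).mono_left nhdsWithin_le_nhds
    obtain ⟨ε, hε, hpos⟩ :=
      ((hlim.eventually (mem_interior_iff_mem_nhds.1 hX)).and self_mem_nhdsWithin).exists
    have hle : 0 ≤ v ⬝ᵥ (X - ε • (1 : Matrix n n ℝ)) *ᵥ v := hε v
    rw [sub_mulVec, smul_mulVec, one_mulVec, dotProduct_sub, dotProduct_smul, smul_eq_mul] at hle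
    have hvv : 0 < v ⬝ᵥ v := by simpa using dotProduct_star_self_pos_iff.2 hv
    linarith [mul_pos (Set.mem_Ioi.1 hpos) hvv]
  · intro hX
    have hsphere : ∀ᶠ Y in 𝓝 X, ∀ v ∈ Metric.sphere (0 : n → ℝ) 1, 0 < v ⬝ᵥ Y *ᵥ v := by
      refine (isCompact_sphere (0 : n → ℝ) 1).eventually_forall_of_forall_eventually fun v hv => ?_
      have hcont : Continuous fun z : Matrix n n ℝ × (n → ℝ) => z.2 ⬝ᵥ z.1 *ᵥ z.2 := by fun_prop
      refine (hcont.tendsto (X, v)).eventually_const_lt (hX v ?_)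
      rintro rfl
      simp at hv
    refine mem_interior_iff_mem_nhds.2 (hsphere.mono fun Y hY v => ?_)
    rcases eq_or_ne v 0 with rfl | hv
    · simp
    · have hpos := hY (‖v‖⁻¹ • v) (by simp [norm_smul, hv])
      rw [mulVec_smul, dotProduct_smul, smul_dotProduct, smul_smul, smul_eq_mul] at hpos
      exact (pos_of_mul_pos_right hpos (by positivity)).le

lemma interior_accretiveCone_nonempty :
    (interior (accretiveCone n : Set (Matrix n n ℝ))).Nonempty := by
  classical
  refine ⟨1, mem_interior_accretiveCone_iff.2 fun v hv => ?_⟩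
  simpa using dotProduct_star_self_pos_iff.2 hv

lemma exists_posSemidef_eq_trace_mul {φ : Matrix n n ℝ →ₗ[ℝ] ℝ}
    (hφ : ∀ X ∈ accretiveCone n, 0 ≤ φ X) :
    ∃ X : Matrix n n ℝ, X.PosSemidef ∧ ∀ Y, φ Y = (X * Y).trace := by
  classical
  let X : Matrix n n ℝ := Matrix.of fun i j => φ (single j i 1)
  have htrace (Y : Matrix n n ℝ) : φ Y = (X * Y).trace := by
    suffices φ = (traceLinearMap n ℝ ℝ).comp (LinearMap.mulLeft ℝ X) from
      LinearMap.congr_fun this Y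
    refine Matrix.ext_linearMap ℝ fun i j => LinearMap.ext_ring ?_
    simp [X, trace_mul_single]
  have hsymm (i j : n) : φ (single i j 1) ≤ φ (single j i 1) := by
    have hskew : single j i (1 : ℝ) - single i j 1 ∈ accretiveCone n := fun v => by
      simp [sub_mulVec, single_mulVec_eq, mul_comm]
    simpa using hφ _ hskew
  refine ⟨X, posSemidef_iff_mem_accretiveCone.2
    ⟨ext fun i j => (hsymm i j).antisymm (hsymm j i), fun v => ?_⟩, htrace⟩
  have hv : v ⬝ᵥ X *ᵥ v = φ (vecMulVec v v) := by
    rw [htrace, mul_vecMulVec, trace_vecMulVec, dotProduct_comm]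
  rw [hv]
  refine hφ _ fun w => ?_
  rw [vecMulVec_mulVec, dotProduct_smul, op_smul_eq_smul, smul_eq_mul, dotProduct_comm w v]
  exact mul_self_nonneg _

end AccretiveCone

section KrausMap

variable {ι n : Type*} [Fintype ι] [Fintype n]

/-- The Kraus map `X ↦ ∑ i, M i * X * (M i)ᵀ`: the evolution of second moments under a random
linear system with coefficient matrices `M i`. -/
noncomputable def krausMap (M : ι → Matrix n n ℝ) : Module.End ℝ (Matrix n n ℝ) :=
  ∑ i, (LinearMap.mulLeft ℝ (M i)).comp (LinearMap.mulRight ℝ (M i)ᵀ)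

variable {M : ι → Matrix n n ℝ} {X Y Z P : Matrix n n ℝ}

lemma krausMap_apply (M : ι → Matrix n n ℝ) (X : Matrix n n ℝ) :
    krausMap M X = ∑ i, M i * X * (M i)ᵀ := by
  simp [krausMap, LinearMap.sum_apply, mul_assoc]

lemma krausMap_transpose (M : ι → Matrix n n ℝ) (X : Matrix n n ℝ) :
    krausMap M Xᵀ = (krausMap M X)ᵀ := by
  simp [krausMap_apply, transpose_sum, mul_assoc]

lemma krausMap_congr {N : ι → Matrix n n ℝ} (hX : Xᵀ = X) (h : ∀ i, M i * X = N i * X) :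
    krausMap M X = krausMap N X := by
  simp only [krausMap_apply]
  refine Finset.sum_congr rfl fun i _ => ?_
  have htranspose := congrArg transpose (h i)
  rw [transpose_mul, transpose_mul, hX] at htranspose
  rw [mul_assoc, htranspose, ← mul_assoc, h i]

lemma dotProduct_krausMap_mulVec (M : ι → Matrix n n ℝ) (X : Matrix n n ℝ) (u v : n → ℝ) :
    u ⬝ᵥ krausMap M X *ᵥ v = ∑ i, ((M i)ᵀ *ᵥ u) ⬝ᵥ X *ᵥ ((M i)ᵀ *ᵥ v) := by
  simp only [krausMap_apply, sum_mulVec, dotProduct_sum, ← mulVec_mulVec, dotProduct_mulVec u (M _),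
    mulVec_transpose]

lemma trace_krausMap_mul (M : ι → Matrix n n ℝ) (X Y : Matrix n n ℝ) :
    (krausMap M X * Y).trace = (X * krausMap (fun i => (M i)ᵀ) Y).trace := by
  simp only [krausMap_apply, Finset.sum_mul, Finset.mul_sum, trace_sum, transpose_transpose]
  refine Finset.sum_congr rfl fun i _ => ?_
  rw [mul_assoc (M i), mul_assoc (M i), trace_mul_comm (M i)]
  simp only [mul_assoc]

lemma krausMap_mem_accretiveCone (hX : X ∈ accretiveCone n) : krausMap M X ∈ accretiveCone n := by
  intro v
  rw [dotProduct_krausMap_mulVec]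
  exact Finset.sum_nonneg fun i _ => hX _

lemma isUnit_of_trace_adjoint {F G : Module.End ℝ (Matrix n n ℝ)}
    (hFG : ∀ X Y, (F X * Y).trace = (X * G Y).trace) (hF : IsUnit F) : IsUnit G := by
  classical
  refine (LinearMap.isUnit_iff_ker_eq_bot G).2 (LinearMap.ker_eq_bot'.2 fun Y hY => ?_)
  refine ext_iff_trace_mul_left.2 fun Z => ?_
  obtain ⟨X, rfl⟩ := ((Module.End.isUnit_iff F).1 hF).surjective Z
  rw [hFG, hY, mul_zero, mul_zero]

lemma spectralRadius_krausMap_transpose (M : ι → Matrix n n ℝ) :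
    spectralRadius ℝ (krausMap fun i => (M i)ᵀ) = spectralRadius ℝ (krausMap M) := by
  have hsub (M : ι → Matrix n n ℝ) :
      spectrum ℝ (krausMap fun i => (M i)ᵀ) ⊆ spectrum ℝ (krausMap M) := by
    refine fun μ hμ hunit => hμ (isUnit_of_trace_adjoint (fun X Y => ?_) hunit)
    simp [Module.algebraMap_end_apply, sub_mul, mul_sub, trace_krausMap_mul]
  simp only [spectralRadius, (hsub M).antisymm (by simpa using hsub fun i => (M i)ᵀ)]

lemma exists_forall_abs_dotProduct_mulVec_mul_le (hX : X ≠ 0)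
    (hZ : ∀ v, v ≠ 0 → 0 < v ⬝ᵥ Z *ᵥ v) :
    ∃ u v, u ⬝ᵥ X *ᵥ v ≠ 0 ∧ ∀ u' v', |u' ⬝ᵥ X *ᵥ v'| * (u ⬝ᵥ Z *ᵥ u + v ⬝ᵥ Z *ᵥ v) ≤
      |u ⬝ᵥ X *ᵥ v| * (u' ⬝ᵥ Z *ᵥ u' + v' ⬝ᵥ Z *ᵥ v') := by
  classical
  have hZ_nonneg (v : n → ℝ) : 0 ≤ v ⬝ᵥ Z *ᵥ v := by
    rcases eq_or_ne v 0 with rfl | hv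
    · simp
    · exact (hZ v hv).le
  have hpos (w : (n → ℝ) × (n → ℝ)) (hw : w ≠ 0) :
      0 < w.1 ⬝ᵥ Z *ᵥ w.1 + w.2 ⬝ᵥ Z *ᵥ w.2 := by
    rcases eq_or_ne w.1 0 with h1 | h1
    · exact add_pos_of_nonneg_of_pos (hZ_nonneg _) (hZ _ fun h2 => hw (Prod.ext h1 h2))
    · exact add_pos_of_pos_of_nonneg (hZ _ h1) (hZ_nonneg _)
  obtain ⟨i, j, hij⟩ : ∃ i j, X i j ≠ 0 := by
    by_contra! hzero
    exact hX (ext hzero)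
  let y : (n → ℝ) × (n → ℝ) := (Pi.single i 1, Pi.single j 1)
  have hy : y ≠ 0 := by simp [y]
  have hXy : 0 < |y.1 ⬝ᵥ X *ᵥ y.2| := by simpa [y] using hij
  have : Nontrivial ((n → ℝ) × (n → ℝ)) := nontrivial_of_ne y 0 hy
  obtain ⟨w, hw, hmax⟩ := exists_forall_mul_le_mul_of_homogeneous
    (f := fun w : (n → ℝ) × (n → ℝ) => |w.1 ⬝ᵥ X *ᵥ w.2|)
    (g := fun w => w.1 ⬝ᵥ Z *ᵥ w.1 + w.2 ⬝ᵥ Z *ᵥ w.2) (by fun_prop) (by fun_prop)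
    (fun c w => by simp [mulVec_smul, abs_mul, ← mul_assoc, ← sq])
    (fun c w => by simp [mulVec_smul]; ring) hpos
  have hXw : 0 < |w.1 ⬝ᵥ X *ᵥ w.2| :=
    pos_of_mul_pos_left ((mul_pos hXy (hpos w hw)).trans_le (hmax y)) (hpos y hy).le
  exact ⟨w.1, w.2, abs_pos.1 hXw, fun u' v' => hmax (u', v')⟩

-- At a pair `(u, v)` maximising `|u ⬝ᵥ X *ᵥ v|` relative to the quadratic form of `Z`, where `X` is
-- an eigenvector, the Kraus map multiplies the numerator by `μ` but decreases the denominator.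
lemma abs_lt_one_of_hasEigenvalue_krausMap (hZ : Z ∈ accretiveCone n)
    (hlt : ∀ v, v ≠ 0 → v ⬝ᵥ krausMap M Z *ᵥ v < v ⬝ᵥ Z *ᵥ v) {μ : ℝ}
    (hμ : (krausMap M).HasEigenvalue μ) : |μ| < 1 := by
  obtain ⟨X, hX⟩ := hμ.exists_hasEigenvector
  have hZ_pos (v : n → ℝ) (hv : v ≠ 0) : 0 < v ⬝ᵥ Z *ᵥ v :=
    (krausMap_mem_accretiveCone hZ v).trans_lt (hlt v hv)
  obtain ⟨u, v, huv, hmax⟩ := exists_forall_abs_dotProduct_mulVec_mul_le hX.2 hZ_pos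
  have hu : u ≠ 0 := by
    rintro rfl
    simp at huv
  have hv : v ≠ 0 := by
    rintro rfl
    simp at huv
  set d := u ⬝ᵥ Z *ᵥ u + v ⬝ᵥ Z *ᵥ v
  have hd_pos : 0 < d := add_pos (hZ_pos u hu) (hZ_pos v hv)
  have hX_pos : 0 < |u ⬝ᵥ X *ᵥ v| := abs_pos.2 huv
  refine lt_of_mul_lt_mul_right ?_ (mul_pos hX_pos hd_pos).le
  calc |μ| * (|u ⬝ᵥ X *ᵥ v| * d) = |u ⬝ᵥ krausMap M X *ᵥ v| * d := by
        rw [hX.apply_eq_smul, smul_mulVec, dotProduct_smul, smul_eq_mul, abs_mul, mul_assoc]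
    _ ≤ ∑ i, |((M i)ᵀ *ᵥ u) ⬝ᵥ X *ᵥ ((M i)ᵀ *ᵥ v)| * d := by
        rw [dotProduct_krausMap_mulVec, ← Finset.sum_mul]
        exact mul_le_mul_of_nonneg_right (Finset.abs_sum_le_sum_abs _ _) hd_pos.le
    _ ≤ |u ⬝ᵥ X *ᵥ v| * (u ⬝ᵥ krausMap M Z *ᵥ u + v ⬝ᵥ krausMap M Z *ᵥ v) := by
        simp only [dotProduct_krausMap_mulVec, ← Finset.sum_add_distrib, Finset.mul_sum]
        exact Finset.sum_le_sum fun i _ => hmax _ _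
    _ < 1 * (|u ⬝ᵥ X *ᵥ v| * d) := by
        rw [one_mul]
        exact mul_lt_mul_of_pos_left (add_lt_add (hlt u hu) (hlt v hv)) hX_pos

end KrausMap

section Stability

variable {ι n : Type*} [Fintype ι] [Fintype n] {M : ι → Matrix n n ℝ}

attribute [local instance] Matrix.normedAddCommGroup Matrix.normedSpace

lemma posSemidef_of_sub_krausMap_posSemidef (hM : spectralRadius ℝ (krausMap M) < 1)
    {X : Matrix n n ℝ} (hX : (X - krausMap M X).PosSemidef) : X.PosSemidef := by
  obtain ⟨hsymm, hmem⟩ := posSemidef_iff_mem_accretiveCone.1 hX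
  refine posSemidef_iff_mem_accretiveCone.2 ⟨?_, mem_of_sub_map_mem isClosed_accretiveCone
    interior_accretiveCone_nonempty (fun _ => krausMap_mem_accretiveCone) hM hmem⟩
  refine injective_one_sub_of_spectralRadius_lt_one hM ?_
  rwa [transpose_sub, ← krausMap_transpose] at hsymm

lemma posSemidef_of_forall_trace_mul_nonneg {X : Matrix n n ℝ} (hX : Xᵀ = X)
    (h : ∀ Y, Y.PosSemidef → 0 ≤ (X * Y).trace) : X.PosSemidef := by
  refine posSemidef_iff_mem_accretiveCone.2 ⟨hX, fun v => ?_⟩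
  have htrace := h _ (posSemidef_vecMulVec_self_star v)
  rwa [mul_vecMulVec, trace_vecMulVec, dotProduct_comm] at htrace

open scoped MatrixOrder in
theorem spectralRadius_krausMap_lt_one_iff :
    spectralRadius ℝ (krausMap M) < 1 ↔
      ∀ X : Matrix n n ℝ, X.PosSemidef → (krausMap M X - X).PosSemidef → X = 0 := by
  constructor
  · intro hM X hX hFX
    have hneg : (-X).PosSemidef := posSemidef_of_sub_krausMap_posSemidef hM (by
      rwa [map_neg, sub_neg_eq_add, neg_add_eq_sub])
    exact le_antisymm (neg_nonneg.1 (nonneg_iff_posSemidef.2 hneg)) (nonneg_iff_posSemidef.2 hX)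
  · intro h
    rw [← spectralRadius_krausMap_transpose]
    obtain ⟨Z, hZ, hint⟩ | ⟨φ, hφ0, hφ, hφ1⟩ := exists_mem_interior_or_exists_nonneg_functional
      (interior_accretiveCone_nonempty (n := n)) (1 - krausMap fun i => (M i)ᵀ)
    · refine spectralRadius_lt_one_of_hasEigenvalue fun μ =>
        abs_lt_one_of_hasEigenvalue_krausMap hZ fun v hv => ?_
      simpa [sub_mulVec, dotProduct_sub] using mem_interior_accretiveCone_iff.1 hint v hv
    · obtain ⟨X, hX, hXφ⟩ := exists_posSemidef_eq_trace_mul hφ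
      have hFX : (krausMap M X - X).PosSemidef := by
        refine posSemidef_of_forall_trace_mul_nonneg ?_ fun Y hY => ?_
        · rw [transpose_sub, ← krausMap_transpose, (posSemidef_iff_mem_accretiveCone.1 hX).1]
        · have hle := hφ1 Y (posSemidef_iff_mem_accretiveCone.1 hY).2
          rw [hXφ] at hle
          simp only [LinearMap.sub_apply, Module.End.one_apply, mul_sub, sub_mul, trace_sub,
            trace_krausMap_mul] at hle ⊢
          linarith
      refine absurd (LinearMap.ext fun Y => ?_) hφ0
      rw [hXφ, h X hX hFX, zero_mul, trace_zero, LinearMap.zero_apply]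

end Stability

section PosSemidef

lemma trace_mul_nonneg_of_posSemidef {n : Type*} [Fintype n] {X Y : Matrix n n ℝ}
    (hX : X.PosSemidef) (hY : Y.PosSemidef) :
    0 ≤ (X * Y).trace := by
  obtain ⟨k, v, rfl⟩ := posSemidef_iff_eq_sum_vecMulVec.1 hY
  rw [Finset.mul_sum, trace_sum]
  refine Finset.sum_nonneg fun i _ => ?_
  rw [mul_vecMulVec, trace_vecMulVec, dotProduct_comm]
  exact hX.dotProduct_mulVec_nonneg (v i)

lemma posSemidef_add_transpose_mul_mul_same {n m : Type*} [Finite n] [Fintype m]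
    {Q : Matrix n n ℝ} {R : Matrix m m ℝ} (hQ : Q.PosSemidef) (hR : R.PosSemidef)
    (L : Matrix m n ℝ) : (Q + Lᵀ * R * L).PosSemidef := by
  have := Fintype.ofFinite n
  exact hQ.add (hR.conjTranspose_mul_mul_same L)

lemma mul_eq_zero_of_trace_conj_mul_nonpos {n m : Type*} [Fintype n] [Fintype m]
    {D : Matrix m n ℝ} {H : Matrix m m ℝ} {X : Matrix n n ℝ} (hH : H.PosDef) (hX : X.PosSemidef)
    (h : (Dᵀ * H * D * X).trace ≤ 0) : D * X = 0 := by
  obtain ⟨k, v, rfl⟩ := posSemidef_iff_eq_sum_vecMulVec.1 hX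
  have hterm (i : Fin k) : (Dᵀ * H * D * vecMulVec (v i) (star (v i))).trace =
      star (D *ᵥ v i) ⬝ᵥ H *ᵥ (D *ᵥ v i) := by
    rw [mul_vecMulVec, trace_vecMulVec, dotProduct_comm, star_trivial, star_trivial,
      ← mulVec_mulVec, ← mulVec_mulVec, dotProduct_transpose_mulVec, dotProduct_comm]
  simp only [Finset.mul_sum, trace_sum, hterm] at h
  have hnonneg (i : Fin k) : 0 ≤ star (D *ᵥ v i) ⬝ᵥ H *ᵥ (D *ᵥ v i) :=
    hH.posSemidef.dotProduct_mulVec_nonneg _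
  have hzero := (Finset.sum_eq_zero_iff_of_nonneg fun i _ => hnonneg i).1
    (h.antisymm (Finset.sum_nonneg fun i _ => hnonneg i))
  rw [Matrix.mul_sum]
  refine Finset.sum_eq_zero fun i hi => ?_
  have hDv : D *ᵥ v i = 0 := by
    by_contra hne
    exact (hH.dotProduct_mulVec_pos hne).ne' (hzero i hi)
  rw [mul_vecMulVec, hDv, zero_vecMulVec]

lemma exists_tendsto_of_antitone_posSemidef {n : Type*} [Finite n] {P : ℕ → Matrix n n ℝ}
    (hP : ∀ k, (P k).PosSemidef) (hanti : ∀ k, (P k - P (k + 1)).PosSemidef) :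
    ∃ X : Matrix n n ℝ, X.PosSemidef ∧ Tendsto P atTop (𝓝 X) := by
  classical
  have := Fintype.ofFinite n
  have hform (v : n → ℝ) : ∃ l, Tendsto (fun k => v ⬝ᵥ P k *ᵥ v) atTop (𝓝 l) := by
    refine ⟨_, tendsto_atTop_ciInf (antitone_nat_of_succ_le fun k => ?_) ⟨0, ?_⟩⟩
    · have hle := (posSemidef_iff_mem_accretiveCone.1 (hanti k)).2 v
      rwa [sub_mulVec, dotProduct_sub, sub_nonneg] at hle
    · rintro _ ⟨k, rfl⟩
      exact (posSemidef_iff_mem_accretiveCone.1 (hP k)).2 v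
  have hentry (i j : n) : ∃ l, Tendsto (fun k => P k i j) atTop (𝓝 l) := by
    obtain ⟨a, ha⟩ := hform (Pi.single i 1 + Pi.single j 1)
    obtain ⟨b, hb⟩ := hform (Pi.single i 1)
    obtain ⟨c, hc⟩ := hform (Pi.single j 1)
    refine ⟨_, (((ha.sub hb).sub hc).div_const 2).congr fun k => ?_⟩
    have hsymm : P k j i = P k i j :=
      congrFun (congrFun (posSemidef_iff_mem_accretiveCone.1 (hP k)).1 i) j
    simp only [mulVec_add, add_dotProduct, dotProduct_add, single_one_dotProduct,
      mulVec_single_one, col_apply, hsymm]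
    ring
  choose X hX using hentry
  have hlim : Tendsto P atTop (𝓝 (Matrix.of X)) :=
    tendsto_pi_nhds.2 fun i => tendsto_pi_nhds.2 fun j => hX i j
  exact ⟨Matrix.of X, isClosed_setOf_posSemidef.mem_of_tendsto hlim (Eventually.of_forall hP), hlim⟩

end PosSemidef

section Riccati

lemma completing_the_square {n m : Type*} [Fintype m] [DecidableEq m] {H : Matrix m m ℝ}
    (hH : Hᵀ = H) (hunit : IsUnit H) (S L : Matrix m n ℝ) :
    Lᵀ * H * L + Lᵀ * S + Sᵀ * L =
      (L - -H⁻¹ * S)ᵀ * H * (L - -H⁻¹ * S) - Sᵀ * H⁻¹ * S := by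
  have hdet : IsUnit H.det := (isUnit_iff_isUnit_det H).1 hunit
  simp only [Matrix.neg_mul, sub_neg_eq_add, transpose_add, transpose_mul, transpose_nonsing_inv,
    hH, Matrix.mul_add, Matrix.add_mul, Matrix.mul_assoc, mul_nonsing_inv_cancel_left _ _ hdet,
    nonsing_inv_mul_cancel_left _ _ hdet]
  abel

variable {ι n m : Type*} [Fintype ι] [Fintype n] [Fintype m]

/-- The coefficients of the linear system with state matrices `A i` and input matrices `B i`
after closing the loop with the gain `L`. -/
def closedLoop (A : ι → Matrix n n ℝ) (B : ι → Matrix n m ℝ) (L : Matrix m n ℝ) (i : ι) :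
    Matrix n n ℝ :=
  A i + B i * L

/-- Mean-square stability of the closed loop with gain `L`: its second-moment operator has spectral
radius less than one, the spectrum being taken over `ℝ`. -/
def IsStabilizing (A : ι → Matrix n n ℝ) (B : ι → Matrix n m ℝ) (L : Matrix m n ℝ) : Prop :=
  spectralRadius ℝ (krausMap (closedLoop A B L)) < 1

/-- The right-hand side of the stochastic Lyapunov equation for the gain `L`: the quadratic cost of
applying `L` for one step, followed by the terminal cost `P`. -/
noncomputable def lyapunovMap (A : ι → Matrix n n ℝ) (B : ι → Matrix n m ℝ) (Q : Matrix n n ℝ)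
    (R : Matrix m m ℝ) (L : Matrix m n ℝ) (P : Matrix n n ℝ) : Matrix n n ℝ :=
  krausMap (fun i => (closedLoop A B L i)ᵀ) P + Q + Lᵀ * R * L

/-- The Hessian in the input of the one-step cost with terminal cost `P`. -/
def inputHessian (B : ι → Matrix n m ℝ) (R : Matrix m m ℝ) (P : Matrix n n ℝ) : Matrix m m ℝ :=
  R + ∑ i, (B i)ᵀ * P * B i

variable {A : ι → Matrix n n ℝ} {B : ι → Matrix n m ℝ} {Q P : Matrix n n ℝ} {R : Matrix m m ℝ}
  {L : Matrix m n ℝ}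

lemma continuous_lyapunovMap (A : ι → Matrix n n ℝ) (B : ι → Matrix n m ℝ) (Q : Matrix n n ℝ)
    (R : Matrix m m ℝ) :
    Continuous fun z : Matrix m n ℝ × Matrix n n ℝ => lyapunovMap A B Q R z.1 z.2 := by
  simp only [lyapunovMap, krausMap_apply, closedLoop]
  fun_prop

lemma eq_lyapunovMap_of_tendsto {L : ℕ → Matrix m n ℝ} {P : ℕ → Matrix n n ℝ} {K : Matrix m n ℝ}
    {X : Matrix n n ℝ} (hP : ∀ k, P k = lyapunovMap A B Q R (L k) (P k))
    (hLK : Tendsto L atTop (𝓝 K)) (hPX : Tendsto P atTop (𝓝 X)) :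
    X = lyapunovMap A B Q R K X := by
  have hlim := ((continuous_lyapunovMap A B Q R).tendsto (K, X)).comp (hLK.prodMk_nhds hPX)
  exact tendsto_nhds_unique hPX (hlim.congr fun k => (hP k).symm)

lemma posDef_inputHessian {m : Type*} [Finite m] {B : ι → Matrix n m ℝ} {R : Matrix m m ℝ}
    (hR : R.PosDef) (hP : P.PosSemidef) : (inputHessian B R P).PosDef := by
  have := Fintype.ofFinite m
  exact hR.add_posSemidef <| posSemidef_sum _ fun i _ => hP.conjTranspose_mul_mul_same (B i)

lemma IsStabilizing.posSemidef_of_sub (hL : IsStabilizing A B L)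
    (h : (P - krausMap (fun i => (closedLoop A B L i)ᵀ) P).PosSemidef) : P.PosSemidef :=
  posSemidef_of_sub_krausMap_posSemidef ((spectralRadius_krausMap_transpose _).trans_lt hL) h

lemma IsStabilizing.posSemidef_of_eq_lyapunovMap (hL : IsStabilizing A B L) (hQ : Q.PosSemidef)
    (hR : R.PosSemidef) (hP : P = lyapunovMap A B Q R L P) : P.PosSemidef := by
  refine hL.posSemidef_of_sub ?_
  have hrhs : P - krausMap (fun i => (closedLoop A B L i)ᵀ) P = Q + Lᵀ * R * L := by
    nth_rw 1 [hP, lyapunovMap]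
    abel
  rw [hrhs]
  exact posSemidef_add_transpose_mul_mul_same hQ hR L

variable [DecidableEq m]

/-- The gain obtained from `P` by policy improvement; it minimises the one-step cost with terminal
cost `P`. -/
noncomputable def improvedGain (A : ι → Matrix n n ℝ) (B : ι → Matrix n m ℝ) (R : Matrix m m ℝ)
    (P : Matrix n n ℝ) : Matrix m n ℝ :=
  -(inputHessian B R P)⁻¹ * ∑ i, (B i)ᵀ * P * A i

/-- The right-hand side of the stochastic algebraic Riccati equation. -/
noncomputable def riccatiMap (A : ι → Matrix n n ℝ) (B : ι → Matrix n m ℝ) (Q : Matrix n n ℝ)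
    (R : Matrix m m ℝ) (P : Matrix n n ℝ) : Matrix n n ℝ :=
  Q + ∑ i, (A i)ᵀ * P * A i -
    (∑ i, (A i)ᵀ * P * B i) * (inputHessian B R P)⁻¹ * ∑ i, (B i)ᵀ * P * A i

lemma lyapunovMap_eq_riccatiMap_add (hR : R.PosDef) (hP : P.PosSemidef) (L : Matrix m n ℝ) :
    lyapunovMap A B Q R L P = riccatiMap A B Q R P +
      (L - improvedGain A B R P)ᵀ * inputHessian B R P * (L - improvedGain A B R P) := by
  have hH := posDef_inputHessian (B := B) hR hP
  have hPsymm : Pᵀ = P := hP.1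
  have hcross : (∑ i, (B i)ᵀ * P * A i)ᵀ = ∑ i, (A i)ᵀ * P * B i := by
    simp [transpose_sum, hPsymm, Matrix.mul_assoc]
  have hHsymm : (inputHessian B R P)ᵀ = inputHessian B R P := hH.1
  have hsquare := completing_the_square hHsymm hH.isUnit (∑ i, (B i)ᵀ * P * A i) L
  rw [hcross] at hsquare
  have hexpand : lyapunovMap A B Q R L P = Q + ∑ i, (A i)ᵀ * P * A i +
      (Lᵀ * inputHessian B R P * L + Lᵀ * ∑ i, (B i)ᵀ * P * A i +
        (∑ i, (A i)ᵀ * P * B i) * L) := by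
    simp only [lyapunovMap, krausMap_apply, closedLoop, inputHessian, transpose_transpose,
      transpose_add, transpose_mul, Matrix.mul_add, Matrix.add_mul, Matrix.mul_assoc,
      Matrix.mul_sum, Matrix.sum_mul, Finset.sum_add_distrib]
    abel
  rw [hexpand, hsquare, riccatiMap, improvedGain]
  abel

lemma lyapunovMap_improvedGain (hR : R.PosDef) (hP : P.PosSemidef) :
    lyapunovMap A B Q R (improvedGain A B R P) P = riccatiMap A B Q R P := by
  rw [lyapunovMap_eq_riccatiMap_add hR hP, sub_self, Matrix.mul_zero, add_zero]

lemma eq_lyapunovMap_improvedGain_add (hR : R.PosDef) (hPpsd : P.PosSemidef)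
    (hP : P = lyapunovMap A B Q R L P) :
    P = lyapunovMap A B Q R (improvedGain A B R P) P +
      (L - improvedGain A B R P)ᵀ * inputHessian B R P * (L - improvedGain A B R P) := by
  rwa [lyapunovMap_improvedGain hR hPpsd, ← lyapunovMap_eq_riccatiMap_add hR hPpsd]

-- If the improved closed loop had a nonzero positive semidefinite `X` with `F X ≥ X`, pairing the
-- cost identity with `X` would force both gains to agree on the range of `X`, so that `X` would
-- also contradict the stability of the old closed loop.
theorem IsStabilizing.isStabilizing_improvedGain (hL : IsStabilizing A B L) (hQ : Q.PosSemidef)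
    (hR : R.PosDef) (hP : P = lyapunovMap A B Q R L P) :
    IsStabilizing A B (improvedGain A B R P) := by
  have hPpsd := hL.posSemidef_of_eq_lyapunovMap hQ hR.posSemidef hP
  refine spectralRadius_krausMap_lt_one_iff.2 fun X hX hFX => ?_
  have hcost := eq_lyapunovMap_improvedGain_add hR hPpsd hP
  set K := improvedGain A B R P
  have hpair : (P * X).trace = (P * krausMap (closedLoop A B K) X).trace +
      ((Q + Kᵀ * R * K) * X).trace + ((L - K)ᵀ * inputHessian B R P * (L - K) * X).trace := by
    nth_rw 1 [hcost]
    simp only [lyapunovMap, Matrix.add_mul, trace_add, trace_krausMap_mul, transpose_transpose,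
      add_assoc]
  have hLX : (L - K) * X = 0 := by
    refine mul_eq_zero_of_trace_conj_mul_nonpos (posDef_inputHessian (B := B) hR hPpsd) hX ?_
    have hgrow := trace_mul_nonneg_of_posSemidef hPpsd hFX
    rw [Matrix.mul_sub, trace_sub] at hgrow
    linarith [trace_mul_nonneg_of_posSemidef
      (posSemidef_add_transpose_mul_mul_same hQ hR.posSemidef K) hX]
  refine spectralRadius_krausMap_lt_one_iff.1 hL X hX ?_
  have hclosedLoop (i : ι) : closedLoop A B L i * X = closedLoop A B K i * X := by
    rw [Matrix.sub_mul, sub_eq_zero] at hLX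
    simp only [closedLoop, Matrix.add_mul, Matrix.mul_assoc, hLX]
  have hsymm : Xᵀ = X := hX.1
  rwa [krausMap_congr hsymm hclosedLoop]

lemma sub_posSemidef_of_eq_lyapunovMap {P' : Matrix n n ℝ} (hR : R.PosDef) (hPpsd : P.PosSemidef)
    (hP : P = lyapunovMap A B Q R L P) (hK : IsStabilizing A B (improvedGain A B R P))
    (hP' : P' = lyapunovMap A B Q R (improvedGain A B R P) P') : (P - P').PosSemidef := by
  refine hK.posSemidef_of_sub ?_
  have hcost := eq_lyapunovMap_improvedGain_add hR hPpsd hP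
  set K := improvedGain A B R P
  have hrhs : P - P' - krausMap (fun i => (closedLoop A B K i)ᵀ) (P - P') =
      (L - K)ᵀ * inputHessian B R P * (L - K) := by
    rw [map_sub]
    nth_rw 1 [hcost, hP']
    rw [lyapunovMap, lyapunovMap]
    abel
  rw [hrhs]
  exact (posDef_inputHessian hR hPpsd).posSemidef.conjTranspose_mul_mul_same (L - K)

lemma continuousAt_improvedGain (h : IsUnit (inputHessian B R P)) :
    ContinuousAt (improvedGain A B R) P := by
  have hcont : Continuous fun P => inputHessian B R P := by
    unfold inputHessian
    fun_prop
  have hinv : ContinuousAt Inv.inv (inputHessian B R P) := by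
    refine continuousAt_matrix_inv _ ?_
    rw [Ring.inverse_eq_inv']
    exact continuousAt_inv₀ ((isUnit_iff_isUnit_det _).1 h).ne_zero
  have hcomp : ContinuousAt (fun P => (inputHessian B R P)⁻¹) P :=
    ContinuousAt.comp (f := fun P => inputHessian B R P) hinv hcont.continuousAt
  unfold improvedGain
  fun_prop

end Riccati

theorem stmt12_general {ι n m : Type*} [Fintype ι] [Fintype n] [Fintype m] [DecidableEq m]
    {A : ι → Matrix n n ℝ} {B : ι → Matrix n m ℝ} {Q : Matrix n n ℝ} (hQ : Q.PosSemidef)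
    {R : Matrix m m ℝ} (hR : R.PosDef) {L : ℕ → Matrix m n ℝ} (hL0 : IsStabilizing A B (L 0))
    {P : ℕ → Matrix n n ℝ} (hP : ∀ τ, P τ = lyapunovMap A B Q R (L τ) (P τ))
    (hL : ∀ τ, L (τ + 1) = improvedGain A B R (P τ)) :
    (∀ τ, IsStabilizing A B (L τ)) ∧ (∀ τ, (P τ - P (τ + 1)).PosSemidef) ∧
      (∀ τ, (P τ).PosSemidef) ∧
      ∃ Pstar : Matrix n n ℝ, Pstar.PosSemidef ∧ Pstar = riccatiMap A B Q R Pstar ∧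
        Tendsto P atTop (𝓝 Pstar) ∧ Tendsto L atTop (𝓝 (improvedGain A B R Pstar)) := by
  have hstab (τ : ℕ) : IsStabilizing A B (L τ) := by
    induction τ with
    | zero => exact hL0
    | succ τ ih => exact hL τ ▸ ih.isStabilizing_improvedGain hQ hR (hP τ)
  have hpsd (τ : ℕ) : (P τ).PosSemidef :=
    (hstab τ).posSemidef_of_eq_lyapunovMap hQ hR.posSemidef (hP τ)
  have hanti (τ : ℕ) : (P τ - P (τ + 1)).PosSemidef :=
    sub_posSemidef_of_eq_lyapunovMap hR (hpsd τ) (hP τ) (hL τ ▸ hstab (τ + 1))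
      (hL τ ▸ hP (τ + 1))
  obtain ⟨Pstar, hPstar, hPlim⟩ := exists_tendsto_of_antitone_posSemidef hpsd hanti
  have hLlim : Tendsto L atTop (𝓝 (improvedGain A B R Pstar)) := by
    have hcont := continuousAt_improvedGain (A := A) (posDef_inputHessian (B := B) hR hPstar).isUnit
    have hlim := hcont.tendsto.comp hPlim
    exact (tendsto_add_atTop_iff_nat 1).1 (hlim.congr fun τ => (hL τ).symm)
  have hlyap := eq_lyapunovMap_of_tendsto hP hLlim hPlim
  rw [lyapunovMap_improvedGain hR hPstar] at hlyap
  exact ⟨hstab, hanti, hpsd, Pstar, hPstar, hlyap, hPlim, hLlim⟩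

section IndependentNoise

variable {n m p q : ℕ}

/-- The state matrices of the system with independent multiplicative noises, indexed by the nominal
term, the state noises and the input noises. Variances enter as squares, hence the roots. -/
noncomputable def stateMatrices (A : Matrix (Fin n) (Fin n) ℝ)
    (A' : Fin p → Matrix (Fin n) (Fin n) ℝ) (al : Fin p → ℝ) :
    Unit ⊕ Fin p ⊕ Fin q → Matrix (Fin n) (Fin n) ℝ :=
  Sum.elim (fun _ => A) (Sum.elim (fun i => √(al i) • A' i) 0)

/-- The input matrices of the system with independent multiplicative noises, with the same indexing
and scaling as `stateMatrices`. -/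
noncomputable def inputMatrices (B : Matrix (Fin n) (Fin m) ℝ)
    (B' : Fin q → Matrix (Fin n) (Fin m) ℝ) (be : Fin q → ℝ) :
    Unit ⊕ Fin p ⊕ Fin q → Matrix (Fin n) (Fin m) ℝ :=
  Sum.elim (fun _ => B) (Sum.elim 0 fun j => √(be j) • B' j)

variable {A : Matrix (Fin n) (Fin n) ℝ} {A' : Fin p → Matrix (Fin n) (Fin n) ℝ}
  {B : Matrix (Fin n) (Fin m) ℝ} {B' : Fin q → Matrix (Fin n) (Fin m) ℝ}
  {al : Fin p → ℝ} {be : Fin q → ℝ}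

lemma calT_eq_krausMap (hal : ∀ i, 0 ≤ al i) (hbe : ∀ j, 0 ≤ be j) (L : Matrix (Fin m) (Fin n) ℝ) :
    calT A A' B B' al be L =
      krausMap (closedLoop (stateMatrices A A' al) (inputMatrices B B' be) L) := by
  refine LinearMap.ext fun X => ?_
  simp [calT, sandwich, krausMap_apply, closedLoop, stateMatrices, inputMatrices,
    LinearMap.sum_apply, smul_smul, Real.mul_self_sqrt, hal, hbe, mul_assoc, add_assoc]

lemma calTstar_eq_krausMap (hal : ∀ i, 0 ≤ al i) (hbe : ∀ j, 0 ≤ be j)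
    (L : Matrix (Fin m) (Fin n) ℝ) :
    calTstar A A' B B' al be L =
      krausMap fun i => (closedLoop (stateMatrices A A' al) (inputMatrices B B' be) L i)ᵀ := by
  refine LinearMap.ext fun X => ?_
  simp [calTstar, sandwich, krausMap_apply, closedLoop, stateMatrices, inputMatrices,
    LinearMap.sum_apply, smul_smul, Real.mul_self_sqrt, hal, hbe, mul_assoc, add_assoc]

lemma admissible_iff_isStabilizing (hal : ∀ i, 0 ≤ al i) (hbe : ∀ j, 0 ≤ be j)
    {L : Matrix (Fin m) (Fin n) ℝ} :
    Admissible A A' B B' al be L ↔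
      IsStabilizing (stateMatrices A A' al) (inputMatrices B B' be) L := by
  rw [Admissible, IsStabilizing, calT_eq_krausMap hal hbe]

lemma inputHessian_inputMatrices (hbe : ∀ j, 0 ≤ be j) (R : Matrix (Fin m) (Fin m) ℝ)
    (P : Matrix (Fin n) (Fin n) ℝ) :
    inputHessian (inputMatrices (p := p) B B' be) R P =
      R + Bᵀ * P * B + ∑ j, be j • ((B' j)ᵀ * P * B' j) := by
  simp [inputHessian, inputMatrices, smul_smul, Real.mul_self_sqrt, hbe, add_assoc]

lemma improvedGain_stateMatrices (hbe : ∀ j, 0 ≤ be j) (R : Matrix (Fin m) (Fin m) ℝ)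
    (P : Matrix (Fin n) (Fin n) ℝ) :
    improvedGain (stateMatrices A A' al) (inputMatrices B B' be) R P =
      -(R + Bᵀ * P * B + ∑ j, be j • ((B' j)ᵀ * P * B' j))⁻¹ * (Bᵀ * P * A) := by
  rw [improvedGain, inputHessian_inputMatrices hbe]
  simp [stateMatrices, inputMatrices]

lemma riccatiMap_stateMatrices (hal : ∀ i, 0 ≤ al i) (hbe : ∀ j, 0 ≤ be j)
    (Q : Matrix (Fin n) (Fin n) ℝ) (R : Matrix (Fin m) (Fin m) ℝ) (P : Matrix (Fin n) (Fin n) ℝ) :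
    riccatiMap (stateMatrices A A' al) (inputMatrices B B' be) Q R P =
      Q + Aᵀ * P * A + (∑ i, al i • ((A' i)ᵀ * P * A' i)) -
        Aᵀ * P * B * (R + Bᵀ * P * B + ∑ j, be j • ((B' j)ᵀ * P * B' j))⁻¹ * (Bᵀ * P * A) := by
  rw [riccatiMap, inputHessian_inputMatrices hbe]
  simp [stateMatrices, inputMatrices, smul_smul, Real.mul_self_sqrt, hal, add_assoc]

end IndependentNoise

theorem stmt12 {n m p q : ℕ} (hn : 0 < n) (hm : 0 < m)
    (A : Matrix (Fin n) (Fin n) ℝ) (A' : Fin p → Matrix (Fin n) (Fin n) ℝ)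
    (B : Matrix (Fin n) (Fin m) ℝ) (B' : Fin q → Matrix (Fin n) (Fin m) ℝ)
    (al : Fin p → ℝ) (be : Fin q → ℝ) (hal : ∀ i, 0 ≤ al i) (hbe : ∀ j, 0 ≤ be j)
    (Q : Matrix (Fin n) (Fin n) ℝ) (hQ : Q.PosSemidef)
    (R : Matrix (Fin m) (Fin m) ℝ) (hR : R.PosDef)
    (L : ℕ → Matrix (Fin m) (Fin n) ℝ) (hadm0 : Admissible A A' B B' al be (L 0))
    (P : ℕ → Matrix (Fin n) (Fin n) ℝ)
    (hP : ∀ τ, P τ = calTstar A A' B B' al be (L τ) (P τ) + Q + (L τ)ᵀ * R * (L τ))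
    (hLrec : ∀ τ, L (τ + 1) =
      -(R + Bᵀ * P τ * B + ∑ j, be j • ((B' j)ᵀ * P τ * B' j))⁻¹ * (Bᵀ * P τ * A)) :
    (∀ τ, Admissible A A' B B' al be (L τ)) ∧
    (∀ τ, (P τ - P (τ + 1)).PosSemidef) ∧
    (∀ τ, (P τ).PosSemidef) ∧
    ∃ Pstar : Matrix (Fin n) (Fin n) ℝ, Pstar.PosSemidef ∧
      (Pstar = Q + Aᵀ * Pstar * A + (∑ i, al i • ((A' i)ᵀ * Pstar * A' i)) -
        Aᵀ * Pstar * B *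
          (R + Bᵀ * Pstar * B + ∑ j, be j • ((B' j)ᵀ * Pstar * B' j))⁻¹ *
          (Bᵀ * Pstar * A)) ∧
      Filter.Tendsto P Filter.atTop (nhds Pstar) ∧
      Filter.Tendsto L Filter.atTop (nhds
        (-(R + Bᵀ * Pstar * B + ∑ j, be j • ((B' j)ᵀ * Pstar * B' j))⁻¹ *
          (Bᵀ * Pstar * A))) := by
  simp only [admissible_iff_isStabilizing hal hbe, calTstar_eq_krausMap hal hbe,
    ← improvedGain_stateMatrices (A' := A') (al := al) hbe, ← riccatiMap_stateMatrices hal hbe]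
    at hadm0 hP hLrec ⊢
  exact stmt12_general hQ hR hadm0 hP hLrec
end

section
/- Let the gain L ∈ ℝ^{m×n} be given, let P be a symmetric solution of the stochastic Lyapunov equation for L, and let H be the (n+m)×(n+m) matrix with blocks H_xx = Q + Aᵀ P A + Σ_{i=1}^p ᾱ_i A_iᵀ P A_i, H_xu = Aᵀ P B = H_uxᵀ, H_uu = R + Bᵀ P B + Σ_{j=1}^q β̄_j B_jᵀ P B_j. Let Σ_{k+1} = 𝒯_L(Σ_k) + D be the closed-loop covariance recursion from any symmetric positive semidefinite Σ_0, and write M = [I; L] for the (n+m)×n matrix stacking the identity above L. Then for every k, the Q-function Bellman identity holds: tr(H · M Σ_k Mᵀ) = tr((Q + Lᵀ R L) Σ_k) − tr(H · M D Mᵀ) + tr(H · M Σ_{k+1} Mᵀ). -/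
open Matrix Filter Topology

/-!
Since `M = [I; L]`, the compression `Mᵀ H M` equals `𝒯_L^*(P) + Q + Lᵀ R L`, which is `P` by the
stochastic Lyapunov equation. Cyclicity of the trace then turns `tr (H M X Mᵀ)` into `tr (P X)` and
makes `𝒯_L^*` the trace adjoint of `𝒯_L`, so the Bellman identity is the Lyapunov equation paired
with `X`.
-/

section MatrixIdentities

variable {m n K : Type*} [Fintype m] [Fintype n] [CommSemiring K]

theorem trace_mul_mul_mul_transpose (P : Matrix m m K) (N : Matrix m n K) (X : Matrix n n K) :
    (P * (N * X * Nᵀ)).trace = (Nᵀ * P * N * X).trace := by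
  calc (P * (N * X * Nᵀ)).trace = (P * N * X * Nᵀ).trace := by simp only [Matrix.mul_assoc]
    _ = (Nᵀ * (P * N * X)).trace := Matrix.trace_mul_comm _ _
    _ = (Nᵀ * P * N * X).trace := by simp only [Matrix.mul_assoc]

/-- The matrix `M = [I; L]` for which `z = M x` stacks the state `x` above the input `u = L x`. -/
def feedbackRows [DecidableEq n] (L : Matrix m n K) : Matrix (n ⊕ m) n K :=
  fromRows 1 L

theorem transpose_feedbackRows_mul_fromBlocks_mul [DecidableEq n] (Hxx : Matrix n n K)
    (Hxu : Matrix n m K) (Hux : Matrix m n K) (Huu : Matrix m m K) (L : Matrix m n K) :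
    (feedbackRows L)ᵀ * fromBlocks Hxx Hxu Hux Huu * feedbackRows L =
      Hxx + Lᵀ * Hux + Hxu * L + Lᵀ * Huu * L := by
  rw [feedbackRows, transpose_fromRows, transpose_one, fromCols_mul_fromBlocks,
    fromCols_mul_fromRows, Matrix.one_mul, Matrix.one_mul, Matrix.mul_one, Matrix.add_mul,
    ← add_assoc]

end MatrixIdentities

/-- The data of a discrete-time linear system with state- and input-multiplicative noise: the mean
dynamics `(x, u) ↦ A x + B u`, and uncorrelated noises of variance `α i` multiplying
`stateNoise i * x` and of variance `β j` multiplying `inputNoise j * u`. The variances are arbitrary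
scalars of `K`; nonnegativity is not part of the data. -/
structure MultiplicativeNoiseSystem (n m ι κ K : Type*) where
  A : Matrix n n K
  stateNoise : ι → Matrix n n K
  B : Matrix n m K
  inputNoise : κ → Matrix n m K
  α : ι → K
  β : κ → K

namespace MultiplicativeNoiseSystem

variable {n m ι κ K : Type*} [Fintype n] [Fintype ι] [Fintype κ] [CommSemiring K]
  (sys : MultiplicativeNoiseSystem n m ι κ K)

/-- The kernel `H` of the Q-function with stage cost `(Q, R)` and continuation value `P`. The block
`H_ux` is `Bᵀ P A`, which is `H_xuᵀ` when `P` is symmetric. -/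
def qKernel (Q : Matrix n n K) (R : Matrix m m K) (P : Matrix n n K) :
    Matrix (n ⊕ m) (n ⊕ m) K :=
  fromBlocks
    (Q + sys.Aᵀ * P * sys.A + ∑ i, sys.α i • ((sys.stateNoise i)ᵀ * P * sys.stateNoise i))
    (sys.Aᵀ * P * sys.B)
    (sys.Bᵀ * P * sys.A)
    (R + sys.Bᵀ * P * sys.B + ∑ j, sys.β j • ((sys.inputNoise j)ᵀ * P * sys.inputNoise j))

theorem qKernel_of_isSymm {P : Matrix n n K} (hP : P.IsSymm) (Q : Matrix n n K)
    (R : Matrix m m K) :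
    sys.qKernel Q R P = fromBlocks
      (Q + sys.Aᵀ * P * sys.A + ∑ i, sys.α i • ((sys.stateNoise i)ᵀ * P * sys.stateNoise i))
      (sys.Aᵀ * P * sys.B)
      ((sys.Aᵀ * P * sys.B)ᵀ)
      (R + sys.Bᵀ * P * sys.B + ∑ j, sys.β j • ((sys.inputNoise j)ᵀ * P * sys.inputNoise j)) := by
  have hux : (sys.Aᵀ * P * sys.B)ᵀ = sys.Bᵀ * P * sys.A := by
    rw [transpose_mul, transpose_mul, transpose_transpose, hP.eq, Matrix.mul_assoc]
  rw [qKernel, hux]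

variable [Fintype m]

/-- The closed-loop covariance operator `𝒯_L`, which propagates the second moment of the state
under the feedback `u = L x`. -/
def covarianceMap (L : Matrix m n K) (X : Matrix n n K) : Matrix n n K :=
  (sys.A + sys.B * L) * X * (sys.A + sys.B * L)ᵀ
    + ∑ i, sys.α i • (sys.stateNoise i * X * (sys.stateNoise i)ᵀ)
    + ∑ j, sys.β j • (sys.inputNoise j * L * X * (sys.inputNoise j * L)ᵀ)

/-- The operator `𝒯_L^*`, which propagates the kernel of a quadratic value function under the
feedback `u = L x`. -/
def valueMap (L : Matrix m n K) (P : Matrix n n K) : Matrix n n K :=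
  (sys.A + sys.B * L)ᵀ * P * (sys.A + sys.B * L)
    + ∑ i, sys.α i • ((sys.stateNoise i)ᵀ * P * sys.stateNoise i)
    + ∑ j, sys.β j • ((sys.inputNoise j * L)ᵀ * P * (sys.inputNoise j * L))

theorem trace_mul_covarianceMap (L : Matrix m n K) (P X : Matrix n n K) :
    (P * sys.covarianceMap L X).trace = (sys.valueMap L P * X).trace := by
  simp only [covarianceMap, Matrix.mul_add P, Matrix.mul_sum, Matrix.mul_smul, trace_add,
    trace_sum, trace_smul, trace_mul_mul_mul_transpose]
  simp only [valueMap, Matrix.add_mul _ _ X, Matrix.sum_mul, Matrix.smul_mul, trace_add,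
    trace_sum, trace_smul]

theorem transpose_feedbackRows_mul_qKernel_mul [DecidableEq n] (Q : Matrix n n K)
    (R : Matrix m m K) (P : Matrix n n K) (L : Matrix m n K) :
    (feedbackRows L)ᵀ * sys.qKernel Q R P * feedbackRows L =
      sys.valueMap L P + Q + Lᵀ * R * L := by
  rw [qKernel, transpose_feedbackRows_mul_fromBlocks_mul, valueMap]
  simp only [transpose_add, transpose_mul, Matrix.mul_add, Matrix.add_mul, Matrix.mul_sum,
    Matrix.sum_mul, Matrix.mul_smul, Matrix.smul_mul, Matrix.mul_assoc]
  abel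

theorem trace_qKernel_mul_of_eq_valueMap [DecidableEq n] {Q : Matrix n n K} {R : Matrix m m K}
    {P : Matrix n n K} {L : Matrix m n K}
    (hP : P = sys.valueMap L P + Q + Lᵀ * R * L) (X : Matrix n n K) :
    (sys.qKernel Q R P * (feedbackRows L * X * (feedbackRows L)ᵀ)).trace = (P * X).trace := by
  rw [trace_mul_mul_mul_transpose, transpose_feedbackRows_mul_qKernel_mul, ← hP]

end MultiplicativeNoiseSystem

section ClosedLoopOperators

variable {n m p q : ℕ} (A : Matrix (Fin n) (Fin n) ℝ) (A' : Fin p → Matrix (Fin n) (Fin n) ℝ)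
  (B : Matrix (Fin n) (Fin m) ℝ) (B' : Fin q → Matrix (Fin n) (Fin m) ℝ)
  (al : Fin p → ℝ) (be : Fin q → ℝ) (L : Matrix (Fin m) (Fin n) ℝ)

theorem sandwich_apply (M X : Matrix (Fin n) (Fin n) ℝ) : sandwich M X = M * X * Mᵀ :=
  (Matrix.mul_assoc M X Mᵀ).symm

theorem calT_apply (X : Matrix (Fin n) (Fin n) ℝ) :
    calT A A' B B' al be L X =
      MultiplicativeNoiseSystem.covarianceMap ⟨A, A', B, B', al, be⟩ L X := by
  simp only [calT, MultiplicativeNoiseSystem.covarianceMap, LinearMap.add_apply,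
    LinearMap.sum_apply, LinearMap.smul_apply, sandwich_apply]

theorem calTstar_apply (P : Matrix (Fin n) (Fin n) ℝ) :
    calTstar A A' B B' al be L P =
      MultiplicativeNoiseSystem.valueMap ⟨A, A', B, B', al, be⟩ L P := by
  simp only [calTstar, MultiplicativeNoiseSystem.valueMap, LinearMap.add_apply,
    LinearMap.sum_apply, LinearMap.smul_apply, sandwich_apply, transpose_transpose]

end ClosedLoopOperators

theorem stmt15_general {n m ι κ K : Type*} [Fintype n] [DecidableEq n] [Fintype m] [Fintype ι]
    [Fintype κ] [CommRing K] (sys : MultiplicativeNoiseSystem n m ι κ K)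
    {Q : Matrix n n K} {R : Matrix m m K} {P : Matrix n n K} {L : Matrix m n K}
    (hP : P = sys.valueMap L P + Q + Lᵀ * R * L) (D X : Matrix n n K) :
    (sys.qKernel Q R P * (feedbackRows L * X * (feedbackRows L)ᵀ)).trace =
      ((Q + Lᵀ * R * L) * X).trace
        - (sys.qKernel Q R P * (feedbackRows L * D * (feedbackRows L)ᵀ)).trace
        + (sys.qKernel Q R P *
            (feedbackRows L * (sys.covarianceMap L X + D) * (feedbackRows L)ᵀ)).trace := by
  have lyapunov : (P * X).trace =
      (P * sys.covarianceMap L X).trace + ((Q + Lᵀ * R * L) * X).trace := by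
    rw [sys.trace_mul_covarianceMap, ← trace_add, ← Matrix.add_mul, ← add_assoc, ← hP]
  simp only [sys.trace_qKernel_mul_of_eq_valueMap hP]
  rw [Matrix.mul_add, trace_add, lyapunov]
  ring

theorem stmt15 {n m p q : ℕ} (hn : 0 < n) (hm : 0 < m)
    (A : Matrix (Fin n) (Fin n) ℝ) (A' : Fin p → Matrix (Fin n) (Fin n) ℝ)
    (B : Matrix (Fin n) (Fin m) ℝ) (B' : Fin q → Matrix (Fin n) (Fin m) ℝ)
    (al : Fin p → ℝ) (be : Fin q → ℝ) (hal : ∀ i, 0 ≤ al i) (hbe : ∀ j, 0 ≤ be j)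
    (Q : Matrix (Fin n) (Fin n) ℝ) (hQ : Q.PosSemidef)
    (R : Matrix (Fin m) (Fin m) ℝ) (hR : R.PosDef)
    (D : Matrix (Fin n) (Fin n) ℝ) (hD : D.PosDef)
    (L : Matrix (Fin m) (Fin n) ℝ)
    (P : Matrix (Fin n) (Fin n) ℝ) (hPsym : Pᵀ = P)
    (hP : P = calTstar A A' B B' al be L P + Q + Lᵀ * R * L)
    (H : Matrix (Fin n ⊕ Fin m) (Fin n ⊕ Fin m) ℝ)
    (hH : H = Matrix.fromBlocks
      (Q + Aᵀ * P * A + ∑ i, al i • ((A' i)ᵀ * P * A' i))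
      (Aᵀ * P * B)
      ((Aᵀ * P * B)ᵀ)
      (R + Bᵀ * P * B + ∑ j, be j • ((B' j)ᵀ * P * B' j)))
    (S : ℕ → Matrix (Fin n) (Fin n) ℝ) (hS0 : (S 0).PosSemidef)
    (hrec : ∀ k, S (k + 1) = calT A A' B B' al be L (S k) + D)
    (M : Matrix (Fin n ⊕ Fin m) (Fin n) ℝ)
    (hM : M = Matrix.fromRows (1 : Matrix (Fin n) (Fin n) ℝ) L) :
    ∀ k, (H * (M * S k * Mᵀ)).trace
        = ((Q + Lᵀ * R * L) * S k).trace - (H * (M * D * Mᵀ)).trace +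
          (H * (M * S (k + 1) * Mᵀ)).trace := by
  intro k
  rw [calTstar_apply] at hP
  rw [hH, hM, ← feedbackRows, hrec, calT_apply,
    ← MultiplicativeNoiseSystem.qKernel_of_isSymm ⟨A, A', B, B', al, be⟩ hPsym]
  exact stmt15_general _ hP D (S k)
end
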